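/- Let E be a real inner product space, let κ and K be real numbers with 0 ≤ κ ≤ K, and let u₁, u₂, v₁, v₂ ∈ E. Then (K−κ)⟪u₁,v₁⟫ + (K−κ)⟪u₂,v₂⟫ + κ⟪u₂,v₁⟫ + κ⟪u₁,v₂⟫ ≤ (K/2)(‖u₁‖² + ‖u₂‖²) + (K/2)(‖v₁‖² + ‖v₂‖²). -/

import Mathlib

open RealInnerProductSpace

/-!
Young's inequality turns each weighted inner product into half its weight times a sum of two
squared norms, so a squared norm collects half a row or column sum of the weight matrix. The
interface coupling matrix `!![K - κ, κ; κ, K - κ]` has nonnegative entries, and all its row and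
column sums equal `K`.
-/

section

variable {𝕜 E : Type*} [RCLike 𝕜] [SeminormedAddCommGroup E] [InnerProductSpace 𝕜 E]

theorem re_inner_le_half_norm_sq_add_norm_sq (x y : E) :
    RCLike.re (inner 𝕜 x y) ≤ (‖x‖ ^ 2 + ‖y‖ ^ 2) / 2 := by
  linarith [re_inner_le_norm (𝕜 := 𝕜) x y, two_mul_le_add_sq ‖x‖ ‖y‖]

theorem sum_sum_mul_re_inner_le {m n : Type*} [Fintype m] [Fintype n] {A : Matrix m n ℝ}
    (hA : ∀ i j, 0 ≤ A i j) (u : m → E) (v : n → E) :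
    ∑ i, ∑ j, A i j * RCLike.re (inner 𝕜 (u i) (v j)) ≤
      (∑ i, (∑ j, A i j) * ‖u i‖ ^ 2 + ∑ j, (∑ i, A i j) * ‖v j‖ ^ 2) / 2 :=
  calc ∑ i, ∑ j, A i j * RCLike.re (inner 𝕜 (u i) (v j))
    _ ≤ ∑ i, ∑ j, A i j * ((‖u i‖ ^ 2 + ‖v j‖ ^ 2) / 2) := by
      gcongr with i _ j _
      · exact hA i j
      · exact re_inner_le_half_norm_sq_add_norm_sq (u i) (v j)
    _ = (∑ i, ∑ j, A i j * ‖u i‖ ^ 2 + ∑ i, ∑ j, A i j * ‖v j‖ ^ 2) / 2 := by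
      simp only [← Finset.sum_add_distrib, Finset.sum_div, mul_add, mul_div_assoc, add_div]
    _ = (∑ i, (∑ j, A i j) * ‖u i‖ ^ 2 + ∑ j, (∑ i, A i j) * ‖v j‖ ^ 2) / 2 := by
      rw [Finset.sum_comm (f := fun i j ↦ A i j * ‖v j‖ ^ 2)]
      simp only [Finset.sum_mul]

theorem interface_cross_term_estimate_general {κ K : ℝ} (hκ : 0 ≤ κ) (hK : κ ≤ K)
    (u₁ u₂ v₁ v₂ : E) :
    (K - κ) * RCLike.re (inner 𝕜 u₁ v₁) + (K - κ) * RCLike.re (inner 𝕜 u₂ v₂) +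
        κ * RCLike.re (inner 𝕜 u₂ v₁) + κ * RCLike.re (inner 𝕜 u₁ v₂) ≤
      (K / 2) * (‖u₁‖ ^ 2 + ‖u₂‖ ^ 2) + (K / 2) * (‖v₁‖ ^ 2 + ‖v₂‖ ^ 2) := by
  have coupling_nonneg : ∀ i j, 0 ≤ !![K - κ, κ; κ, K - κ] i j := by
    simp [Fin.forall_fin_two, hκ, hK]
  have weighted_young := sum_sum_mul_re_inner_le (𝕜 := 𝕜) coupling_nonneg ![u₁, u₂] ![v₁, v₂]
  simp only [Fin.sum_univ_two, Matrix.of_apply, Matrix.cons_val_zero, Matrix.cons_val_one,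
    sub_add_cancel, add_sub_cancel] at weighted_young
  linarith

end

/-- Interface cross-term estimate (bound (3.6) in the stability proof of ensemble
algorithm A1): for `0 ≤ κ ≤ K` and elements `u₁ u₂ v₁ v₂` of a real inner product
space, the coupling terms are bounded by `(K/2)` times the sum of squared norms. -/
theorem interface_cross_term_estimate
    {E : Type*} [NormedAddCommGroup E] [InnerProductSpace ℝ E]
    (κ K : ℝ) (hκ : 0 ≤ κ) (hK : κ ≤ K) (u₁ u₂ v₁ v₂ : E) :
    (K - κ) * ⟪u₁, v₁⟫ + (K - κ) * ⟪u₂, v₂⟫ + κ * ⟪u₂, v₁⟫ + κ * ⟪u₁, v₂⟫ ≤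
      (K / 2) * (‖u₁‖ ^ 2 + ‖u₂‖ ^ 2) + (K / 2) * (‖v₁‖ ^ 2 + ‖v₂‖ ^ 2) :=
  interface_cross_term_estimate_general (𝕜 := ℝ) hκ hK u₁ u₂ v₁ v₂
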